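/- arXiv:2305.07757 — 2 statements merged into one kernel-verified Lean document; each statement's English description precedes it below -/
import Mathlib

section
/- Let Q(z,z̄) = Σ_{α,β} c_{αβ} z^α z̄^β be a real-valued polynomial function on ℂⁿ (so c_{αβ} = conj(c_{βα})), homogeneous of total degree d ≥ 2 in (z,z̄), with no pluriharmonic terms (c_{αβ} = 0 whenever α = 0 or β = 0), and suppose the model hypersurface M_Q = {(z,w) ∈ ℂⁿ×ℂ : Im w = Q(z,z̄)} is holomorphically nondegenerate. Let λ₁,…,λₙ ∈ ℂ and J₁ ⊆ {1,…,n−1} satisfy λ_{j+1} = λ_j for every j ∈ J₁, define X = Σ_j λ_j z_j ∂/∂z_j and Z = Σ_{j∈J₁} z_j ∂/∂z_{j+1} acting on Q through holomorphic partial derivatives, and set W = X + Z. If W(Q) = Q identically, then every λ_j is real and J₁ = ∅ (i.e. Z = 0). -/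
open Complex

noncomputable section

/-- `QEval c z = Σ_{α,β} c_{αβ} z^α z̄^β`, the real-valued polynomial with
coefficient family `c`. -/
def QEval {n : ℕ} (c : ((Fin n →₀ ℕ) × (Fin n →₀ ℕ)) →₀ ℂ) (z : Fin n → ℂ) : ℂ :=
  c.sum fun p a => a * (∏ j, z j ^ p.1 j) * ∏ j, (starRingEnd ℂ) (z j) ^ p.2 j

/-- The holomorphic partial derivative `∂Q/∂z_k` of `QEval c`. -/
def QDeriv {n : ℕ} (c : ((Fin n →₀ ℕ) × (Fin n →₀ ℕ)) →₀ ℂ) (k : Fin n) (z : Fin n → ℂ) : ℂ :=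
  c.sum fun p a =>
    a * (p.1 k : ℂ) * (∏ j, z j ^ (((p.1 - Finsupp.single k 1) : Fin n →₀ ℕ) j)) *
      ∏ j, (starRingEnd ℂ) (z j) ^ p.2 j

/-- Holomorphic nondegeneracy of `M_Q = {Im w = Q(z,z̄)}`: the only polynomial
vector field `Σ F_j ∂/∂z_j + G ∂/∂w` tangent to `M_Q` in the strong (holomorphic)
sense is zero. -/
def HND {n : ℕ} (c : ((Fin n →₀ ℕ) × (Fin n →₀ ℕ)) →₀ ℂ) : Prop :=
  ∀ (F : Fin n → MvPolynomial (Fin (n + 1)) ℂ) (G : MvPolynomial (Fin (n + 1)) ℂ),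
    (∀ (z : Fin n → ℂ) (u : ℝ),
      MvPolynomial.eval (Fin.snoc z ((u : ℂ) + Complex.I * QEval c z)) G / (2 * Complex.I) -
        ∑ j, MvPolynomial.eval (Fin.snoc z ((u : ℂ) + Complex.I * QEval c z)) (F j) * QDeriv c j z
          = 0) →
    (∀ j, F j = 0) ∧ G = 0

open MvPolynomial in
/-- A complex polynomial in `2n` variables that vanishes at all points `(z, z̄)` is zero. -/
lemma MvPolynomial.eq_zero_of_eval_conj {n : ℕ} (P : MvPolynomial (Fin n ⊕ Fin n) ℂ)
    (h : ∀ z : Fin n → ℂ, eval (Sum.elim z fun j => (starRingEnd ℂ) (z j)) P = 0) : P = 0 := by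
  set g : Fin n ⊕ Fin n → MvPolynomial (Fin n ⊕ Fin n) ℂ :=
    Sum.elim (fun j => X (Sum.inl j) + C I * X (Sum.inr j))
      (fun j => X (Sum.inl j) - C I * X (Sum.inr j)) with hg
  have eval_subst (x : Fin n ⊕ Fin n → ℂ) :
      eval x (bind₁ g P) = eval (fun i => eval x (g i)) P := by
    simp only [← coe_aeval_eq_eval, RingHom.coe_coe, aeval_bind₁]
  have hR : bind₁ g P = 0 := by
    refine MvPolynomial.funext_set (fun _ => Set.range ((↑) : ℝ → ℂ))
      (fun _ => Set.infinite_range_of_injective Complex.ofReal_injective) ?_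
    intro x hx
    rw [map_zero, eval_subst]
    convert h fun j => x (Sum.inl j) + I * x (Sum.inr j) using 3 with
    ext i
    have hconj (i) : (starRingEnd ℂ) (x i) = x i := by
      obtain ⟨r, hr⟩ := hx i (Set.mem_univ i)
      rw [← hr, Complex.conj_ofReal]
    rcases i with j | j <;> simp [hg, hconj, sub_eq_add_neg]
  refine MvPolynomial.funext fun y => ?_
  have key := eval_subst (Sum.elim (fun j => (y (Sum.inl j) + y (Sum.inr j)) / 2)
    (fun j => -I * (y (Sum.inl j) - y (Sum.inr j)) / 2))
  rw [hR, map_zero] at key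
  rw [map_zero, key]
  congr 2
  ext i
  rcases i with j | j <;> simp only [hg, Sum.elim_inl, Sum.elim_inr, map_add, map_sub, map_mul,
    eval_X, eval_C]
  · linear_combination ((y (Sum.inl j) - y (Sum.inr j)) / 2) * I_mul_I
  · linear_combination (-(y (Sum.inl j) - y (Sum.inr j)) / 2) * I_mul_I

section QEval

variable {n : ℕ}

/-- The coefficient family of `Q(z, z̄)` is determined by its values. -/
lemma eq_zero_of_QEval_eq_zero (c : ((Fin n →₀ ℕ) × (Fin n →₀ ℕ)) →₀ ℂ)
    (h : ∀ z, QEval c z = 0) : c = 0 := by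
  have hP := MvPolynomial.eq_zero_of_eval_conj (c.sum fun p a =>
      MvPolynomial.monomial (Finsupp.sumFinsuppEquivProdFinsupp.symm p) a) fun z => by
    rw [← h z, QEval, Finsupp.sum, Finsupp.sum, map_sum]
    refine Finset.sum_congr rfl fun p _ => ?_
    rw [MvPolynomial.eval_monomial, Finsupp.prod_fintype _ _ (by simp), Fintype.prod_sum_type]
    simp [mul_assoc]
  ext q
  have hq := congrArg (MvPolynomial.coeff (Finsupp.sumFinsuppEquivProdFinsupp.symm q)) hP
  rw [Finsupp.sum, MvPolynomial.coeff_sum] at hq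
  simp only [MvPolynomial.coeff_monomial, EmbeddingLike.apply_eq_iff_eq] at hq
  simpa using hq

lemma QEval_add (c c' : ((Fin n →₀ ℕ) × (Fin n →₀ ℕ)) →₀ ℂ) (z : Fin n → ℂ) :
    QEval (c + c') z = QEval c z + QEval c' z :=
  Finsupp.sum_add_index' (by simp) (by intros; ring)

lemma QEval_zero (z : Fin n → ℂ) : QEval 0 z = 0 :=
  Finsupp.sum_zero_index

lemma QEval_single (p : (Fin n →₀ ℕ) × (Fin n →₀ ℕ)) (a : ℂ) (z : Fin n → ℂ) :
    QEval (Finsupp.single p a) z =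
      a * (∏ j, z j ^ p.1 j) * ∏ j, (starRingEnd ℂ) (z j) ^ p.2 j :=
  Finsupp.sum_single_index (by simp)

lemma QEval_sum {ι : Type*} (s : Finset ι) (f : ι → ((Fin n →₀ ℕ) × (Fin n →₀ ℕ)) →₀ ℂ)
    (z : Fin n → ℂ) : QEval (∑ i ∈ s, f i) z = ∑ i ∈ s, QEval (f i) z :=
  map_sum (⟨⟨fun c => QEval c z, QEval_zero z⟩, fun c c' => QEval_add c c' z⟩ :
    (((Fin n →₀ ℕ) × (Fin n →₀ ℕ)) →₀ ℂ) →+ ℂ) f s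

/-- The coefficient family of `z_j ∂Q/∂z_k`. -/
def shiftCoeff (c : ((Fin n →₀ ℕ) × (Fin n →₀ ℕ)) →₀ ℂ) (j k : Fin n) :
    ((Fin n →₀ ℕ) × (Fin n →₀ ℕ)) →₀ ℂ :=
  ∑ p ∈ c.support,
    Finsupp.single (p.1 - Finsupp.single k 1 + Finsupp.single j 1, p.2) (c p * (p.1 k : ℂ))

lemma QEval_shiftCoeff (c : ((Fin n →₀ ℕ) × (Fin n →₀ ℕ)) →₀ ℂ) (j k : Fin n)
    (z : Fin n → ℂ) : QEval (shiftCoeff c j k) z = z j * QDeriv c k z := by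
  rw [shiftCoeff, QEval_sum, QDeriv, Finsupp.sum, Finset.mul_sum]
  refine Finset.sum_congr rfl fun p _ => ?_
  have hj : ∏ i, z i ^ (Finsupp.single j 1 : Fin n →₀ ℕ) i = z j := by
    rw [← Finsupp.prod_fintype _ (fun i e => z i ^ e) (by simp)]
    simp
  simp only [QEval_single, Finsupp.add_apply, pow_add, Finset.prod_mul_distrib, hj]
  ring

lemma exists_of_shiftCoeff_ne_zero {c : ((Fin n →₀ ℕ) × (Fin n →₀ ℕ)) →₀ ℂ} {j k : Fin n}
    {q : (Fin n →₀ ℕ) × (Fin n →₀ ℕ)} (h : shiftCoeff c j k q ≠ 0) :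
    ∃ p ∈ c.support, q.1 + Finsupp.single k 1 = p.1 + Finsupp.single j 1 := by
  rw [shiftCoeff, Finsupp.finsetSum_apply] at h
  obtain ⟨p, hp, hpq⟩ := Finset.exists_ne_zero_of_sum_ne_zero h
  rw [Finsupp.single_apply, ite_ne_right_iff] at hpq
  obtain ⟨rfl, hne⟩ := hpq
  have hk : p.1 k ≠ 0 := by
    rintro h0
    simp [h0] at hne
  refine ⟨p, hp, ?_⟩
  have hle : Finsupp.single k 1 ≤ p.1 := by
    rw [Finsupp.single_le_iff]
    omega
  rw [add_right_comm, tsub_add_cancel_of_le hle]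

lemma shiftCoeff_self (c : ((Fin n →₀ ℕ) × (Fin n →₀ ℕ)) →₀ ℂ) (j : Fin n) :
    shiftCoeff c j j = ∑ p ∈ c.support, Finsupp.single p (c p * (p.1 j : ℂ)) := by
  refine Finset.sum_congr rfl fun p _ => ?_
  by_cases hj : p.1 j = 0
  · simp [hj]
  · have hle : Finsupp.single j 1 ≤ p.1 := by
      rw [Finsupp.single_le_iff]
      omega
    rw [tsub_add_cancel_of_le hle]

lemma shiftCoeff_self_apply (c : ((Fin n →₀ ℕ) × (Fin n →₀ ℕ)) →₀ ℂ) (j : Fin n)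
    (q : (Fin n →₀ ℕ) × (Fin n →₀ ℕ)) : shiftCoeff c j j q = c q * (q.1 j : ℂ) := by
  rw [shiftCoeff_self, Finsupp.finsetSum_apply]
  simp +contextual [Finsupp.single_apply]

/-- A diagonal vector field acts on monomials by weights. -/
lemma sum_mul_QDeriv (c : ((Fin n →₀ ℕ) × (Fin n →₀ ℕ)) →₀ ℂ) (μ : Fin n → ℂ) (r : ℂ)
    (h : ∀ p ∈ c.support, ∑ j, μ j * (p.1 j : ℂ) = r) (z : Fin n → ℂ) :
    ∑ j, μ j * z j * QDeriv c j z = r * QEval c z := by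
  have hterm (j) : μ j * z j * QDeriv c j z = ∑ p ∈ c.support, μ j * (p.1 j : ℂ) *
      (c p * (∏ i, z i ^ p.1 i) * ∏ i, (starRingEnd ℂ) (z i) ^ p.2 i) := by
    rw [mul_assoc, ← QEval_shiftCoeff, shiftCoeff_self, QEval_sum, Finset.mul_sum]
    refine Finset.sum_congr rfl fun p _ => ?_
    rw [QEval_single]
    ring
  simp only [hterm]
  rw [Finset.sum_comm, QEval, Finsupp.sum, Finset.mul_sum]
  refine Finset.sum_congr rfl fun p hp => ?_
  rw [← Finset.sum_mul, h p hp]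

/-- If `W(Q) = Q` for `W` in Jordan form, then every monomial of `Q` has holomorphic weight one. -/
lemma weight_eq_one [NeZero n] (c : ((Fin n →₀ ℕ) × (Fin n →₀ ℕ)) →₀ ℂ)
    (lam : Fin n → ℂ) (J₁ : Finset (Fin n))
    (hJ : ∀ j ∈ J₁, (j : ℕ) + 1 < n)
    (hJordan : ∀ j ∈ J₁, lam (j + 1) = lam j)
    (hWQ : ∀ z : Fin n → ℂ,
        (∑ j, lam j * z j * QDeriv c j z) + (∑ j ∈ J₁, z j * QDeriv c (j + 1) z)
          = QEval c z) :
    ∀ p ∈ c.support, ∑ j, lam j * (p.1 j : ℂ) = 1 := by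
  have hcoeff : (∑ j, lam j • shiftCoeff c j j) + (∑ j ∈ J₁, shiftCoeff c j (j + 1)) +
      (-1 : ℂ) • c = 0 := by
    have hsmul (a : ℂ) (b : ((Fin n →₀ ℕ) × (Fin n →₀ ℕ)) →₀ ℂ) (z) :
        QEval (a • b) z = a * QEval b z := by
      rw [QEval, Finsupp.sum_smul_index (by simp), QEval, Finsupp.sum, Finsupp.sum,
        Finset.mul_sum]
      exact Finset.sum_congr rfl fun p _ => by ring
    refine eq_zero_of_QEval_eq_zero _ fun z => ?_
    simp only [QEval_add, QEval_sum, hsmul, QEval_shiftCoeff, ← mul_assoc]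
    linear_combination hWQ z
  by_contra! hex
  have hne : (c.support.filter fun p => ∑ j, lam j * (p.1 j : ℂ) ≠ 1).Nonempty := by
    obtain ⟨p, hp, hp1⟩ := hex
    exact ⟨p, Finset.mem_filter.2 ⟨hp, hp1⟩⟩
  obtain ⟨q, hq, hmax⟩ := Finset.exists_max_image _ (fun p => ∑ j : Fin n, (j : ℕ) * p.1 j) hne
  obtain ⟨hqs, hq1⟩ := Finset.mem_filter.1 hq
  have hnil : ∑ j ∈ J₁, shiftCoeff c j (j + 1) q = 0 := by
    refine Finset.sum_eq_zero fun j hj => ?_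
    by_contra hjne
    obtain ⟨p, hp, hpq⟩ := exists_of_shiftCoeff_ne_zero hjne
    have happ (i) := DFunLike.congr_fun hpq i
    simp only [Finsupp.add_apply] at happ
    have hlam : ∑ i, lam i * (p.1 i : ℂ) = ∑ i, lam i * (q.1 i : ℂ) := by
      have hs : ∑ i, lam i * ((q.1 i + (Finsupp.single (j + 1) 1 : Fin n →₀ ℕ) i : ℕ) : ℂ) =
          ∑ i, lam i * ((p.1 i + (Finsupp.single j 1 : Fin n →₀ ℕ) i : ℕ) : ℂ) :=
        Finset.sum_congr rfl fun i _ => by rw [happ]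
      simp [Finsupp.single_apply, mul_add, Finset.sum_add_distrib, hJordan j hj] at hs
      exact hs.symm
    have hwt : ∑ i : Fin n, (i : ℕ) * p.1 i = ∑ i : Fin n, (i : ℕ) * q.1 i + 1 := by
      have hs : ∑ i : Fin n, (i : ℕ) * (q.1 i + (Finsupp.single (j + 1) 1 : Fin n →₀ ℕ) i) =
          ∑ i : Fin n, (i : ℕ) * (p.1 i + (Finsupp.single j 1 : Fin n →₀ ℕ) i) :=
        Finset.sum_congr rfl fun i _ => by rw [happ]
      simp [Finsupp.single_apply, mul_add, Finset.sum_add_distrib,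
        Fin.val_add_one_of_lt' (hJ j hj)] at hs
      omega
    have := hmax p (Finset.mem_filter.2 ⟨hp, hlam ▸ hq1⟩)
    omega
  have happ := DFunLike.congr_fun hcoeff q
  simp only [Finsupp.add_apply, Finsupp.finsetSum_apply, Finsupp.smul_apply, hnil,
    shiftCoeff_self_apply, smul_eq_mul, Finsupp.zero_apply] at happ
  have hfactor : c q * (∑ j, lam j * (q.1 j : ℂ) - 1) = 0 := by
    rw [← happ, mul_sub, Finset.mul_sum, add_zero, mul_one, neg_one_mul, ← sub_eq_add_neg]
    exact congrArg (· - c q) (Finset.sum_congr rfl fun j _ => by ring)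
  rcases mul_eq_zero.1 hfactor with h0 | h0
  · exact Finsupp.mem_support_iff.1 hqs h0
  · exact hq1 (sub_eq_zero.1 h0)

/-- Nondegeneracy for vector fields in `z` alone. -/
lemma HND.eq_zero {c : ((Fin n →₀ ℕ) × (Fin n →₀ ℕ)) →₀ ℂ} (hnd : HND c)
    (F : Fin n → MvPolynomial (Fin n) ℂ)
    (h : ∀ z, ∑ j, MvPolynomial.eval z (F j) * QDeriv c j z = 0) (j : Fin n) : F j = 0 := by
  have hF := (hnd (fun j => MvPolynomial.rename Fin.castSucc (F j)) 0 fun z u => by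
    simpa [MvPolynomial.eval_rename, Function.comp_def] using h z).1 j
  exact MvPolynomial.rename_injective _ (Fin.castSucc_injective n) (by rw [hF, map_zero])

end QEval

/-- If moreover `M_Q` is holomorphically nondegenerate and
`W(Q) = Q`, then all eigenvalues `λ_j` are real and the nilpotent part vanishes
(`J₁ = ∅`). -/
theorem stmt1 (n : ℕ) [NeZero n] (d : ℕ) (hd : 2 ≤ d)
    (c : ((Fin n →₀ ℕ) × (Fin n →₀ ℕ)) →₀ ℂ)
    (hreal : ∀ α β : Fin n →₀ ℕ, c (α, β) = (starRingEnd ℂ) (c (β, α)))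
    (hhom : ∀ p ∈ c.support, (p.1.sum fun _ e => e) + (p.2.sum fun _ e => e) = d)
    (hnoplh : ∀ p ∈ c.support, p.1 ≠ 0 ∧ p.2 ≠ 0)
    (hnd : HND c)
    (lam : Fin n → ℂ) (J₁ : Finset (Fin n))
    (hJ : ∀ j ∈ J₁, (j : ℕ) + 1 < n)
    (hJordan : ∀ j ∈ J₁, lam (j + 1) = lam j)
    (hWQ : ∀ z : Fin n → ℂ,
        (∑ j, lam j * z j * QDeriv c j z) + (∑ j ∈ J₁, z j * QDeriv c (j + 1) z)
          = QEval c z) :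
    (∀ j, (lam j).im = 0) ∧ J₁ = ∅ := by
  have hwt := weight_eq_one c lam J₁ hJ hJordan hWQ
  constructor
  · intro j
    have him : ∀ p ∈ c.support, ∑ j, ((lam j).im : ℂ) * (p.1 j : ℂ) = 0 := by
      intro p hp
      have := congrArg Complex.im (hwt p hp)
      simp only [Complex.im_sum, Complex.mul_im, Complex.natCast_re, Complex.natCast_im,
        mul_zero, zero_add, Complex.one_im] at this
      exact_mod_cast this
    have hF := hnd.eq_zero (fun j => MvPolynomial.C ((lam j).im : ℂ) * MvPolynomial.X j)
      (fun z => by simpa using sum_mul_QDeriv c _ 0 him z) j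
    simpa using hF
  · have hZ (z : Fin n → ℂ) : ∑ j ∈ J₁, z j * QDeriv c (j + 1) z = 0 := by
      linear_combination hWQ z - sum_mul_QDeriv c lam 1 hwt z
    refine Finset.eq_empty_of_forall_notMem fun j hj => ?_
    have hF := hnd.eq_zero (fun k => ∑ j ∈ J₁, if j + 1 = k then MvPolynomial.X j else 0)
      (fun z => by
        rw [← hZ z]
        simp only [map_sum, Finset.sum_mul]
        rw [Finset.sum_comm]
        refine Finset.sum_congr rfl fun j _ => ?_
        rw [Finset.sum_eq_single (j + 1)] <;> simp +contextual [eq_comm]) (j + 1)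
    simp [hj] at hF
end
end

section
/- Let P = c_P z₁^{α₁}z₂^{α₂}z₃^{α₃}, Q = c_Q z₁^{β₁}z₂^{β₂}z₃^{β₃}, R = c_R z₁^{γ₁}z₂^{γ₂}z₃^{γ₃} be monomials with nonzero coefficients c_P, c_Q, c_R ∈ ℂ, with deg P + deg Q = 2·deg R and with det[[α₁,β₁,γ₁],[α₂,β₂,γ₂],[α₃,β₃,γ₃]] ≠ 0 (holomorphic nondegeneracy). Let X = Σ_{j,k=1}^3 a_{jk} z_k ∂/∂z_j (a_{jk} ∈ ℂ) be a rotation of M. Then D := Σ_{j=1}^3 a_{jj} z_j ∂/∂z_j is a rotation, N := Σ_{j≠k} a_{jk} z_k ∂/∂z_j is a rotation, and either the matrix of N is nilpotent, or there exists a subset J₁ of the off-diagonal index set J = {(j,k) : j ≠ k, j,k ∈ {1,2,3}} such that N₁ := Σ_{(j,k)∈J₁} a_{jk} z_k ∂/∂z_j and N₂ := Σ_{(j,k)∈J∖J₁} a_{jk} z_k ∂/∂z_j are both nilpotent rotations (and N = N₁ + N₂). -/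
open MvPolynomial Complex

noncomputable section

/-- `Φ(z) = P(z)·conj(Q(z)) + Q(z)·conj(P(z)) + R(z)·conj(R(z))`, so that the model
hypersurface is `M = {(z,w) : Im w = Φ(z)}`. -/
def Phi (P Q R : MvPolynomial (Fin 3) ℂ) (z : Fin 3 → ℂ) : ℂ :=
  eval z P * (starRingEnd ℂ) (eval z Q) + eval z Q * (starRingEnd ℂ) (eval z P) +
    eval z R * (starRingEnd ℂ) (eval z R)

/-- `Φ_j(z) = (∂P/∂z_j)(z)·conj(Q(z)) + (∂Q/∂z_j)(z)·conj(P(z)) + (∂R/∂z_j)(z)·conj(R(z))`. -/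
def PhiD (P Q R : MvPolynomial (Fin 3) ℂ) (j : Fin 3) (z : Fin 3 → ℂ) : ℂ :=
  eval z (pderiv j P) * (starRingEnd ℂ) (eval z Q) +
    eval z (pderiv j Q) * (starRingEnd ℂ) (eval z P) +
    eval z (pderiv j R) * (starRingEnd ℂ) (eval z R)

/-- The monomial `c·z₁^{e₁} z₂^{e₂} z₃^{e₃}`. -/
def mon (c : ℂ) (e : Fin 3 → ℕ) : MvPolynomial (Fin 3) ℂ :=
  C c * X 0 ^ e 0 * X 1 ^ e 1 * X 2 ^ e 2

/-- Total degree of the exponent vector `e`. -/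
def degE (e : Fin 3 → ℕ) : ℕ := e 0 + e 1 + e 2

/-- The determinant of the 3×3 matrix whose columns are the exponent vectors
`a`, `b`, `g` of the three monomials. -/
def edet (a b g : Fin 3 → ℕ) : ℤ :=
  Matrix.det !![(a 0 : ℤ), (b 0 : ℤ), (g 0 : ℤ);
                (a 1 : ℤ), (b 1 : ℤ), (g 1 : ℤ);
                (a 2 : ℤ), (b 2 : ℤ), (g 2 : ℤ)]

/-- The linear field `Σ_{j,k} A_{jk} z_k ∂/∂z_j` is a rotation of `M`. -/
def IsRotation (P Q R : MvPolynomial (Fin 3) ℂ) (A : Matrix (Fin 3) (Fin 3) ℂ) : Prop :=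
  ∀ z : Fin 3 → ℂ, (∑ j, (∑ k, A j k * z k) * PhiD P Q R j z).re = 0

/-- A matrix whose nonzero entries strictly increase a height function is nilpotent. -/
lemma isNilpotent_of_strictMono_support {n R : Type*} [Fintype n] [DecidableEq n] [CommRing R]
    (B : Matrix n n R) (h : n → ℝ) (hB : ∀ j k, B j k ≠ 0 → h j < h k) : IsNilpotent B := by
  have key : ∀ (N : ℕ) (i k : n), (B ^ N) i k ≠ 0 →
      N ≤ (Finset.univ.filter fun x => h x < h k).card := by
    intro N
    induction N with
    | zero => intro i k _; exact Nat.zero_le _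
    | succ N ih =>
      intro i k hik
      rw [pow_succ, Matrix.mul_apply] at hik
      obtain ⟨j, -, hj⟩ := Finset.exists_ne_zero_of_sum_ne_zero hik
      have hjk := hB j k (right_ne_zero_of_mul hj)
      refine Nat.succ_le_of_lt ((ih i j (left_ne_zero_of_mul hj)).trans_lt
        (Finset.card_lt_card ?_))
      refine Finset.ssubset_iff_of_subset (fun x hx => ?_) |>.mpr ⟨j, by simpa using hjk, by simp⟩
      simp only [Finset.mem_filter, Finset.mem_univ, true_and] at hx ⊢
      exact hx.trans hjk
  refine ⟨Fintype.card n, ?_⟩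
  ext i k
  by_contra hne
  have h1 := key _ i k hne
  have h2 : (Finset.univ.filter fun x => h x < h k).card < Fintype.card n :=
    Finset.card_lt_univ_of_notMem (x := k) (by simp)
  omega

/-- The Laurent monomial `z ↦ ∏ᵢ zᵢ^{μᵢ} · conj(zᵢ)^{νᵢ}` on the complex torus, for `κ = (μ, ν)`. -/
def bimonomial {ι : Type*} [Fintype ι] (κ : (ι → ℤ) × (ι → ℤ)) : (ι → ℂˣ) →* ℂ where
  toFun z := ∏ i, (z i : ℂ) ^ κ.1 i * (starRingEnd ℂ) (z i : ℂ) ^ κ.2 i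
  map_one' := by simp
  map_mul' z w := by
    rw [← Finset.prod_mul_distrib]
    refine Finset.prod_congr rfl fun i _ => ?_
    simp only [Pi.mul_apply, Units.val_mul, map_mul, mul_zpow]
    ring

lemma bimonomial_apply {ι : Type*} [Fintype ι] (κ : (ι → ℤ) × (ι → ℤ)) (z : ι → ℂˣ) :
    bimonomial κ z = ∏ i, (z i : ℂ) ^ κ.1 i * (starRingEnd ℂ) (z i : ℂ) ^ κ.2 i := rfl

lemma conj_bimonomial {ι : Type*} [Fintype ι] (κ : (ι → ℤ) × (ι → ℤ)) (z : ι → ℂˣ) :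
    (starRingEnd ℂ) (bimonomial κ z) = bimonomial κ.swap z := by
  simp only [bimonomial_apply, map_prod, map_mul, map_zpow₀, Complex.conj_conj, Prod.fst_swap,
    Prod.snd_swap]
  exact Finset.prod_congr rfl fun i _ => mul_comm _ _

lemma bimonomial_mulSingle {ι : Type*} [Fintype ι] [DecidableEq ι] (κ : (ι → ℤ) × (ι → ℤ))
    (i : ι) (t : ℂˣ) :
    bimonomial κ (Pi.mulSingle i t) = (t : ℂ) ^ κ.1 i * (starRingEnd ℂ) (t : ℂ) ^ κ.2 i := by
  rw [bimonomial_apply, Finset.prod_eq_single i]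
  · simp
  · intro j _ hj
    simp [Pi.mulSingle_eq_of_ne hj]
  · simp

lemma eq_of_forall_zpow_mul_conj_zpow {m n m' n' : ℤ}
    (h : ∀ t : ℂˣ, (t : ℂ) ^ m * (starRingEnd ℂ) (t : ℂ) ^ n
      = (t : ℂ) ^ m' * (starRingEnd ℂ) (t : ℂ) ^ n') : m = m' ∧ n = n' := by
  have h_add : m + n = m' + n' := by
    have h2 := h (Units.mk0 2 two_ne_zero)
    simp only [Units.val_mk0, map_ofNat] at h2
    rw [← zpow_add₀ two_ne_zero, ← zpow_add₀ two_ne_zero] at h2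
    have h3 : (2 : ℝ) ^ (m + n) = (2 : ℝ) ^ (m' + n') := by
      apply Complex.ofReal_injective
      push_cast
      exact h2
    exact zpow_right_injective₀ (by norm_num) (by norm_num) h3
  have h_sub : m - n = m' - n' := by
    have h2 := h (Units.mk0 (Complex.exp I) (Complex.exp_ne_zero _))
    simp only [Units.val_mk0, ← Complex.exp_conj, Complex.conj_I, ← Complex.exp_int_mul,
      ← Complex.exp_add] at h2
    obtain ⟨N, hN⟩ := Complex.exp_eq_exp_iff_exists_int.mp h2
    have h3 := congrArg Complex.im hN
    simp at h3
    by_contra hne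
    have hN0 : N ≠ 0 := by
      rintro rfl
      apply hne
      have h4 : (m : ℝ) - n = m' - n' := by simp at h3; linarith
      exact_mod_cast h4
    refine irrational_pi ⟨((m - n) - (m' - n') : ℤ) / (2 * N : ℤ), ?_⟩
    have hN1 : (N : ℝ) ≠ 0 := by exact_mod_cast hN0
    push_cast
    field_simp
    linarith
  constructor <;> omega

lemma bimonomial_injective {ι : Type*} [Fintype ι] :
    Function.Injective (bimonomial : (ι → ℤ) × (ι → ℤ) → ((ι → ℂˣ) →* ℂ)) := by
  classical
  intro κ κ' h
  have hi : ∀ i, κ.1 i = κ'.1 i ∧ κ.2 i = κ'.2 i := fun i =>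
    eq_of_forall_zpow_mul_conj_zpow fun t => by
      simpa only [bimonomial_mulSingle] using DFunLike.congr_fun h (Pi.mulSingle i t)
  exact Prod.ext (funext fun i => (hi i).1) (funext fun i => (hi i).2)

lemma linearIndependent_bimonomial {ι : Type*} [Fintype ι] :
    LinearIndependent ℂ fun κ : (ι → ℤ) × (ι → ℤ) => (bimonomial κ : (ι → ℂˣ) → ℂ) :=
  (linearIndependent_monoidHom (ι → ℂˣ) ℂ).comp bimonomial bimonomial_injective

/-- A vanishing combination of (possibly repeated) bimonomials has zero total coefficient at each
exponent. -/
lemma sum_single_eq_zero {ι J : Type*} [Fintype ι] [Fintype J] (c : J → ℂ)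
    (κ : J → (ι → ℤ) × (ι → ℤ)) (h : ∀ z, ∑ x, c x * bimonomial (κ x) z = 0) :
    ∑ x, Finsupp.single (κ x) (c x) = 0 := by
  refine linearIndependent_iff.mp linearIndependent_bimonomial _ ?_
  funext z
  simpa [map_sum, Finsupp.linearCombination_single] using h z

lemma sum_mask_eq_zero {ι J : Type*} [Fintype ι] [Fintype J] (c : J → ℂ)
    (κ : J → (ι → ℤ) × (ι → ℤ)) (h : ∀ z, ∑ x, c x * bimonomial (κ x) z = 0)
    (m : (ι → ℤ) × (ι → ℤ) → ℂ) (z : ι → ℂˣ) :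
    ∑ x, m (κ x) * c x * bimonomial (κ x) z = 0 := by
  have h1 := congrArg (Finsupp.linearCombination ℂ fun k => m k * bimonomial k z)
    (sum_single_eq_zero c κ h)
  simp only [map_sum, Finsupp.linearCombination_single, map_zero, smul_eq_mul] at h1
  rw [← h1]
  exact Finset.sum_congr rfl fun x _ => by ring

lemma coeff_eq_zero_of_unique {ι J : Type*} [Fintype ι] [Fintype J] (c : J → ℂ)
    (κ : J → (ι → ℤ) × (ι → ℤ)) (h : ∀ z, ∑ x, c x * bimonomial (κ x) z = 0) (x₀ : J)
    (hx₀ : ∀ x, κ x = κ x₀ → x = x₀) : c x₀ = 0 := by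
  classical
  have h1 := DFunLike.congr_fun (sum_single_eq_zero c κ h) (κ x₀)
  rw [Finsupp.finsetSum_apply, Finset.sum_eq_single x₀] at h1
  · simpa using h1
  · intro x _ hx
    exact Finsupp.single_eq_of_ne fun h2 => hx (hx₀ x h2.symm)
  · simp

/-- Holomorphic exponents of the three summands of `Φ`. -/
def holExp (a b g : Fin 3 → ℕ) : Fin 3 → Fin 3 → ℕ := ![a, b, g]

/-- Antiholomorphic exponents of the three summands of `Φ`. -/
def antiExp (a b g : Fin 3 → ℕ) : Fin 3 → Fin 3 → ℕ := ![b, a, g]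

/-- Coefficients of the three summands of `Φ`. -/
def phiCoeff (cP cQ cR : ℂ) : Fin 3 → ℂ :=
  ![cP * (starRingEnd ℂ) cQ, cQ * (starRingEnd ℂ) cP, cR * (starRingEnd ℂ) cR]

/-- The exponent of the term obtained by applying `z_k ∂/∂z_j` to the `τ`-th summand of `Φ`,
where `x = (τ, j, k)`. -/
def termExp (a b g : Fin 3 → ℕ) (x : Fin 3 × Fin 3 × Fin 3) : (Fin 3 → ℤ) × (Fin 3 → ℤ) :=
  (fun i => (holExp a b g x.1 i : ℤ) + (Pi.single x.2.2 1 - Pi.single x.2.1 1 : Fin 3 → ℤ) i,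
    fun i => antiExp a b g x.1 i)

/-- The coefficient of the term obtained by applying `A_{jk} z_k ∂/∂z_j` to the `τ`-th summand
of `Φ`, where `x = (τ, j, k)`. -/
def termCoeff (cP cQ cR : ℂ) (a b g : Fin 3 → ℕ) (A : Matrix (Fin 3) (Fin 3) ℂ)
    (x : Fin 3 × Fin 3 × Fin 3) : ℂ :=
  A x.2.1 x.2.2 * (phiCoeff cP cQ cR x.1 * holExp a b g x.1 x.2.1)

/-- Exponents of all terms of `XΦ + conj(XΦ)`. -/
def realExp (a b g : Fin 3 → ℕ) :
    (Fin 3 × Fin 3 × Fin 3) ⊕ (Fin 3 × Fin 3 × Fin 3) → (Fin 3 → ℤ) × (Fin 3 → ℤ) :=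
  Sum.elim (termExp a b g) fun x => (termExp a b g x).swap

/-- Coefficients of all terms of `XΦ + conj(XΦ)`. -/
def realCoeff (cP cQ cR : ℂ) (a b g : Fin 3 → ℕ) (A : Matrix (Fin 3) (Fin 3) ℂ) :
    (Fin 3 × Fin 3 × Fin 3) ⊕ (Fin 3 × Fin 3 × Fin 3) → ℂ :=
  Sum.elim (termCoeff cP cQ cR a b g A) fun x => (starRingEnd ℂ) (termCoeff cP cQ cR a b g A x)

lemma eval_mon (c : ℂ) (e : Fin 3 → ℕ) (z : Fin 3 → ℂ) :
    eval z (mon c e) = c * ∏ i, z i ^ e i := by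
  simp [mon, Fin.prod_univ_three, mul_assoc]

lemma mon_eq_monomial (c : ℂ) (e : Fin 3 → ℕ) :
    mon c e = monomial (Finsupp.equivFunOnFinite.symm e) c := by
  rw [monomial_eq, Finsupp.prod_fintype _ _ (by simp)]
  simp [mon, Fin.prod_univ_three, mul_assoc]

lemma mul_eval_pderiv_mon (c : ℂ) (e : Fin 3 → ℕ) (j : Fin 3) (z : Fin 3 → ℂ) :
    z j * eval z (pderiv j (mon c e)) = e j * (c * ∏ i, z i ^ e i) := by
  have h := congrArg (eval z)
    (X_mul_pderiv_monomial (i := j) (m := Finsupp.equivFunOnFinite.symm e) (r := c))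
  rw [← mon_eq_monomial] at h
  simpa [eval_mon] using h

lemma bimonomial_termExp (a b g : Fin 3 → ℕ) (x : Fin 3 × Fin 3 × Fin 3) (z : Fin 3 → ℂˣ) :
    bimonomial (termExp a b g x) z = z x.2.2 * (z x.2.1 : ℂ)⁻¹ *
      ((∏ i, (z i : ℂ) ^ holExp a b g x.1 i) *
        (starRingEnd ℂ) (∏ i, (z i : ℂ) ^ antiExp a b g x.1 i)) := by
  have hs : ∀ k : Fin 3, ∏ i, (z i : ℂ) ^ (Pi.single k 1 : Fin 3 → ℤ) i = z k := by
    intro k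
    rw [Finset.prod_eq_single k] <;> simp +contextual
  rw [← hs x.2.2, ← hs x.2.1, map_prod, ← Finset.prod_inv_distrib, ← Finset.prod_mul_distrib,
    ← Finset.prod_mul_distrib, ← Finset.prod_mul_distrib, bimonomial_apply]
  refine Finset.prod_congr rfl fun i _ => ?_
  simp only [termExp, Pi.sub_apply]
  rw [zpow_add₀ (z i).ne_zero, zpow_sub₀ (z i).ne_zero, zpow_natCast, zpow_natCast, map_pow]
  ring

lemma phiD_mon (cP cQ cR : ℂ) (a b g : Fin 3 → ℕ) (j : Fin 3) (z : Fin 3 → ℂˣ) :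
    PhiD (mon cP a) (mon cQ b) (mon cR g) j (fun i => z i) =
      ∑ τ, (z j : ℂ)⁻¹ * (phiCoeff cP cQ cR τ * holExp a b g τ j *
        ((∏ i, (z i : ℂ) ^ holExp a b g τ i) *
          (starRingEnd ℂ) (∏ i, (z i : ℂ) ^ antiExp a b g τ i))) := by
  have hd : ∀ (c : ℂ) (e : Fin 3 → ℕ), eval (fun i => (z i : ℂ)) (pderiv j (mon c e)) =
      (z j : ℂ)⁻¹ * (e j * (c * ∏ i, (z i : ℂ) ^ e i)) := by
    intro c e
    rw [← mul_eval_pderiv_mon c e j fun i => (z i : ℂ), inv_mul_cancel_left₀ (z j).ne_zero]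
  simp only [PhiD, hd, eval_mon, Fin.sum_univ_three (fun τ => (z j : ℂ)⁻¹ * _), phiCoeff, holExp,
    antiExp, map_mul, Matrix.cons_val]
  ring

lemma sum_phiD_eq (cP cQ cR : ℂ) (a b g : Fin 3 → ℕ) (A : Matrix (Fin 3) (Fin 3) ℂ)
    (z : Fin 3 → ℂˣ) :
    ∑ j, (∑ k, A j k * (z k : ℂ)) * PhiD (mon cP a) (mon cQ b) (mon cR g) j (fun i => z i) =
      ∑ x, termCoeff cP cQ cR a b g A x * bimonomial (termExp a b g x) z := by
  simp only [bimonomial_termExp, phiD_mon, termCoeff, Fintype.sum_prod_type]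
  rw [Finset.sum_comm]
  refine Finset.sum_congr rfl fun j _ => ?_
  rw [Finset.sum_mul, Finset.sum_comm]
  refine Finset.sum_congr rfl fun k _ => ?_
  rw [Finset.mul_sum]
  exact Finset.sum_congr rfl fun τ _ => by ring

lemma sum_realCoeff_eq (cP cQ cR : ℂ) (a b g : Fin 3 → ℕ) (A : Matrix (Fin 3) (Fin 3) ℂ)
    (z : Fin 3 → ℂˣ) :
    ∑ x, realCoeff cP cQ cR a b g A x * bimonomial (realExp a b g x) z =
      ((2 * (∑ j, (∑ k, A j k * (z k : ℂ)) *
        PhiD (mon cP a) (mon cQ b) (mon cR g) j (fun i => z i)).re : ℝ) : ℂ) := by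
  rw [← Complex.add_conj, sum_phiD_eq, map_sum, Fintype.sum_sum_type]
  simp [realCoeff, realExp, conj_bimonomial]

lemma dense_forall_ne_zero {ι : Type*} : Dense {z : ι → ℂ | ∀ i, z i ≠ 0} := by
  have h := dense_pi (Set.univ : Set ι) (s := fun _ => ({0}ᶜ : Set ℂ))
    fun _ _ => dense_compl_singleton 0
  convert h using 1
  ext z
  simp

/-- A linear field is a rotation iff the real part of `XΦ` vanishes as a combination of
bimonomials on the torus. -/
lemma isRotation_iff (cP cQ cR : ℂ) (a b g : Fin 3 → ℕ) (A : Matrix (Fin 3) (Fin 3) ℂ) :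
    IsRotation (mon cP a) (mon cQ b) (mon cR g) A ↔
      ∀ z, ∑ x, realCoeff cP cQ cR a b g A x * bimonomial (realExp a b g x) z = 0 := by
  constructor
  · intro h z
    rw [sum_realCoeff_eq, h fun i => (z i : ℂ)]
    simp
  · intro h
    have hcont : Continuous fun z : Fin 3 → ℂ =>
        (∑ j, (∑ k, A j k * z k) * PhiD (mon cP a) (mon cQ b) (mon cR g) j z).re := by
      unfold PhiD
      have := fun p : MvPolynomial (Fin 3) ℂ => MvPolynomial.continuous_eval p
      have hconj := Complex.continuous_conj
      fun_prop
    refine fun z => congrFun (hcont.ext_on dense_forall_ne_zero continuous_const ?_) z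
    intro z hz
    have h1 := h fun i => Units.mk0 (z i) (hz i)
    rw [sum_realCoeff_eq, Complex.ofReal_eq_zero] at h1
    exact (mul_eq_zero.mp h1).resolve_left two_ne_zero

/-- A nondegenerate exponent matrix admits real weights under which the three monomials have
weights `-1`, `1`, `0`. -/
lemma exists_weights (a b g : Fin 3 → ℕ) (hdet : edet a b g ≠ 0) :
    ∃ h : Fin 3 → ℝ, ∑ i, h i * a i = -1 ∧ ∑ i, h i * b i = 1 ∧ ∑ i, h i * g i = 0 := by
  set M : Matrix (Fin 3) (Fin 3) ℤ := !![(a 0 : ℤ), (b 0 : ℤ), (g 0 : ℤ);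
    (a 1 : ℤ), (b 1 : ℤ), (g 1 : ℤ); (a 2 : ℤ), (b 2 : ℤ), (g 2 : ℤ)] with hM
  have hunit : IsUnit (M.map (Int.castRingHom ℝ)) := by
    rw [Matrix.isUnit_iff_isUnit_det, isUnit_iff_ne_zero, ← RingHom.mapMatrix_apply,
      ← RingHom.map_det]
    exact Int.cast_ne_zero.mpr hdet
  obtain ⟨h, hh⟩ := Matrix.vecMul_surjective_iff_isUnit.mpr hunit ![-1, 1, 0]
  refine ⟨h, ?_, ?_, ?_⟩
  · simpa [Matrix.vecMul, dotProduct, Fin.sum_univ_three, hM] using congrFun hh 0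
  · simpa [Matrix.vecMul, dotProduct, Fin.sum_univ_three, hM] using congrFun hh 1
  · simpa [Matrix.vecMul, dotProduct, Fin.sum_univ_three, hM] using congrFun hh 2

lemma exists_holExp_ne_zero (a b g : Fin 3 → ℕ) (hdet : edet a b g ≠ 0) (j : Fin 3) :
    ∃ τ, holExp a b g τ j ≠ 0 := by
  by_contra! h
  have ha : a j = 0 := h 0
  have hb : b j = 0 := h 1
  have hg : g j = 0 := h 2
  apply hdet
  apply Matrix.det_eq_zero_of_row_eq_zero j
  intro i
  fin_cases j <;> fin_cases i <;> simp_all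

lemma weight_holExp {a b g : Fin 3 → ℕ} {h : Fin 3 → ℝ} (ha : ∑ i, h i * a i = -1)
    (hb : ∑ i, h i * b i = 1) (hg : ∑ i, h i * g i = 0)
    (τ : Fin 3) :
    ∑ i, h i * holExp a b g τ i = (![-1, 1, 0] : Fin 3 → ℝ) τ := by
  fin_cases τ <;> assumption

lemma weight_antiExp {a b g : Fin 3 → ℕ} {h : Fin 3 → ℝ} (ha : ∑ i, h i * a i = -1)
    (hb : ∑ i, h i * b i = 1) (hg : ∑ i, h i * g i = 0)
    (τ : Fin 3) :
    ∑ i, h i * antiExp a b g τ i = (![1, -1, 0] : Fin 3 → ℝ) τ := by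
  fin_cases τ <;> assumption

lemma weight_termExp {a b g : Fin 3 → ℕ} {h : Fin 3 → ℝ} (ha : ∑ i, h i * a i = -1)
    (hb : ∑ i, h i * b i = 1) (hg : ∑ i, h i * g i = 0)
    (x : Fin 3 × Fin 3 × Fin 3) :
    ∑ i, h i * ((termExp a b g x).1 i) =
      (![-1, 1, 0] : Fin 3 → ℝ) x.1 + (h x.2.2 - h x.2.1) := by
  rw [← weight_holExp ha hb hg]
  simp [termExp, mul_add, mul_sub, Finset.sum_add_distrib, Finset.sum_sub_distrib,
    Pi.single_apply]

/-- The weight of `z_k ∂/∂z_j` is determined by the exponents of the terms it produces. -/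
lemma weight_realExp {a b g : Fin 3 → ℕ} {h : Fin 3 → ℝ} (ha : ∑ i, h i * a i = -1)
    (hb : ∑ i, h i * b i = 1) (hg : ∑ i, h i * g i = 0)
    (x : (Fin 3 × Fin 3 × Fin 3) ⊕ (Fin 3 × Fin 3 × Fin 3)) :
    ∑ i, h i * ((realExp a b g x).1 i) + ∑ i, h i * ((realExp a b g x).2 i) =
      h (x.elim id id).2.2 - h (x.elim id id).2.1 := by
  have key : ∀ y : Fin 3 × Fin 3 × Fin 3, ∑ i, h i * ((termExp a b g y).1 i) +
      ∑ i, h i * ((termExp a b g y).2 i) = h y.2.2 - h y.2.1 := by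
    intro y
    have h1 := weight_antiExp ha hb hg y.1
    rw [weight_termExp ha hb hg]
    simp only [termExp, Int.cast_natCast, h1]
    obtain ⟨τ, j, k⟩ := y
    fin_cases τ <;> simp
  rcases x with x | x
  · exact key x
  · rw [add_comm]
    exact key x

/-- Weight components of rotations are rotations. -/
lemma IsRotation.weightComponent {a b g : Fin 3 → ℕ} {h : Fin 3 → ℝ} (ha : ∑ i, h i * a i = -1)
    (hb : ∑ i, h i * b i = 1) (hg : ∑ i, h i * g i = 0)
    {cP cQ cR : ℂ} {A B : Matrix (Fin 3) (Fin 3) ℂ}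
    (hA : IsRotation (mon cP a) (mon cQ b) (mon cR g) A) (p : ℝ → Prop) [DecidablePred p]
    (hB : ∀ j k, B j k = if p (h k - h j) then A j k else 0) :
    IsRotation (mon cP a) (mon cQ b) (mon cR g) B := by
  rw [isRotation_iff] at hA ⊢
  intro z
  rw [← sum_mask_eq_zero _ _ hA
    (fun κ => if p (∑ i, h i * (κ.1 i) + ∑ i, h i * (κ.2 i)) then 1 else 0) z]
  refine Finset.sum_congr rfl fun x _ => ?_
  rw [weight_realExp ha hb hg]
  congr 1
  rcases x with ⟨τ, j, k⟩ | ⟨τ, j, k⟩ <;> by_cases hp : p (h k - h j) <;>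
    simp [realCoeff, termCoeff, hB, hp]

lemma antiExp_injective {a b g : Fin 3 → ℕ} {h : Fin 3 → ℝ} (ha : ∑ i, h i * a i = -1)
    (hb : ∑ i, h i * b i = 1) (hg : ∑ i, h i * g i = 0) :
    Function.Injective (antiExp a b g) := by
  intro τ τ' hτ
  have h1 := weight_antiExp ha hb hg τ
  rw [hτ, weight_antiExp ha hb hg τ'] at h1
  fin_cases τ <;> fin_cases τ' <;> first | rfl | norm_num at h1

/-- A rotation has no off-diagonal entries of weight zero. -/
lemma IsRotation.eq_zero_of_weight_eq {a b g : Fin 3 → ℕ} {h : Fin 3 → ℝ} (ha : ∑ i, h i * a i = -1)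
    (hb : ∑ i, h i * b i = 1) (hg : ∑ i, h i * g i = 0)
    {cP cQ cR : ℂ} (hcP : cP ≠ 0) (hcQ : cQ ≠ 0)
    (hcR : cR ≠ 0) (hdet : edet a b g ≠ 0) {A : Matrix (Fin 3) (Fin 3) ℂ}
    (hA : IsRotation (mon cP a) (mon cQ b) (mon cR g) A) {j k : Fin 3} (hjk : j ≠ k)
    (hh : h j = h k) : A j k = 0 := by
  rw [isRotation_iff] at hA
  obtain ⟨τ, hτ⟩ := exists_holExp_ne_zero a b g hdet j
  have hC : phiCoeff cP cQ cR τ ≠ 0 := by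
    fin_cases τ <;> simp [phiCoeff, hcP, hcQ, hcR]
  have h0 := coeff_eq_zero_of_unique _ _ hA (Sum.inl (τ, j, k)) ?_
  · simpa [realCoeff, termCoeff, hC, hτ] using h0
  rintro (⟨τ', j', k'⟩ | ⟨τ', j', k'⟩) hx
  · simp only [realExp, Sum.elim_inl, termExp, Prod.mk.injEq] at hx
    obtain ⟨h1, h2⟩ := hx
    have hτ' : τ' = τ := antiExp_injective ha hb hg
      (funext fun i => by exact_mod_cast congrFun h2 i)
    subst hτ'
    have hj := congrFun h1 j
    have hk := congrFun h1 k
    simp only [Pi.sub_apply, Pi.single_apply, add_right_inj] at hj hk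
    have : j' = j ∧ k' = k := by
      constructor <;> grind
    rw [this.1, this.2]
  · simp only [realExp, Sum.elim_inl, Sum.elim_inr] at hx
    have h1 : (termExp a b g (τ', j', k')).2 = (termExp a b g (τ, j, k)).1 :=
      congrArg Prod.fst hx
    have h2 := weight_termExp ha hb hg (τ, j, k)
    rw [← h1] at h2
    simp only [termExp, Int.cast_natCast, weight_antiExp ha hb hg, hh, sub_self, add_zero] at h2
    have h3 : antiExp a b g τ' = holExp a b g τ := by
      fin_cases τ <;> fin_cases τ' <;> first | rfl | norm_num at h2
    have h4 := congrFun h1 j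
    simp [termExp, h3, hjk] at h4

/-- For a holomorphically nondegenerate monomial model, any
rotation `X = Σ a_{jk} z_k ∂/∂z_j` splits as `X = D + N` where `D` (the diagonal
part) and `N` (the off-diagonal part) are rotations, and `N` is nilpotent or a sum
`N = N₁ + N₂` of two nilpotent rotations supported on complementary sets of
off-diagonal indices. -/
theorem stmt9 (cP cQ cR : ℂ) (hcP : cP ≠ 0) (hcQ : cQ ≠ 0) (hcR : cR ≠ 0)
    (a b g : Fin 3 → ℕ)
    (hdeg : degE a + degE b = 2 * degE g)
    (hdet : edet a b g ≠ 0)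
    (A : Matrix (Fin 3) (Fin 3) ℂ)
    (hA : IsRotation (mon cP a) (mon cQ b) (mon cR g) A) :
    IsRotation (mon cP a) (mon cQ b) (mon cR g) (Matrix.diagonal fun j => A j j) ∧
    IsRotation (mon cP a) (mon cQ b) (mon cR g) (A - Matrix.diagonal fun j => A j j) ∧
    (IsNilpotent (A - Matrix.diagonal fun j => A j j) ∨
      ∃ J₁ : Finset (Fin 3 × Fin 3), (∀ p ∈ J₁, p.1 ≠ p.2) ∧
        IsNilpotent (Matrix.of fun j k => if (j, k) ∈ J₁ then A j k else 0) ∧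
        IsRotation (mon cP a) (mon cQ b) (mon cR g)
          (Matrix.of fun j k => if (j, k) ∈ J₁ then A j k else 0) ∧
        IsNilpotent (Matrix.of fun j k => if j ≠ k ∧ (j, k) ∉ J₁ then A j k else 0) ∧
        IsRotation (mon cP a) (mon cQ b) (mon cR g)
          (Matrix.of fun j k => if j ≠ k ∧ (j, k) ∉ J₁ then A j k else 0) ∧
        A - Matrix.diagonal (fun j => A j j) =
          (Matrix.of fun j k => if (j, k) ∈ J₁ then A j k else 0) +
            Matrix.of fun j k => if j ≠ k ∧ (j, k) ∉ J₁ then A j k else 0) := by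
  obtain ⟨h, ha, hb, hg⟩ := exists_weights a b g hdet
  have hzero : ∀ j k, j ≠ k → h j = h k → A j k = 0 := fun j k hjk hh =>
    hA.eq_zero_of_weight_eq ha hb hg hcP hcQ hcR hdet hjk hh
  classical
  refine ⟨?_, ?_, Or.inr ⟨Finset.univ.filter fun p => h p.1 < h p.2, ?_, ?_, ?_, ?_, ?_, ?_⟩⟩
  · refine hA.weightComponent ha hb hg (fun x => x = 0) fun j k => ?_
    grind [Matrix.diagonal_apply]
  · refine hA.weightComponent ha hb hg (fun x => x ≠ 0) fun j k => ?_
    rw [Matrix.sub_apply]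
    grind [Matrix.diagonal_apply]
  · intro p hp hne
    simp [hne] at hp
  · refine isNilpotent_of_strictMono_support _ h fun j k hjk => ?_
    simp at hjk
    exact hjk.1
  · refine hA.weightComponent ha hb hg (fun x => 0 < x) fun j k => ?_
    simp
  · refine isNilpotent_of_strictMono_support _ (fun i => -h i) fun j k hjk => ?_
    have := hzero j k
    simp only [Matrix.of_apply, Finset.mem_filter, Finset.mem_univ, true_and] at hjk
    grind
  · refine hA.weightComponent ha hb hg (fun x => x < 0) fun j k => ?_
    have := hzero j k
    simp only [Matrix.of_apply, Finset.mem_filter, Finset.mem_univ, true_and]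
    grind
  · ext j k
    simp only [Matrix.add_apply, Matrix.sub_apply, Matrix.of_apply, Finset.mem_filter,
      Finset.mem_univ, true_and, Matrix.diagonal_apply]
    grind
end
end
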